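/- arXiv:2605.27926 — 2 statements merged into one kernel-verified Lean document; each statement's English description precedes it below -/
import Mathlib

section
/- The polynomial D(X) = 4(X²+1)³ + 27 in ℂ[X] has exactly six roots in ℂ, each of multiplicity one; that is, the multiset of roots of D has no repeated element and its underlying set has cardinality 6. -/
open Polynomial

/-!
Write `D = f ∘ (X² + 1)` with `f = 4Y³ + 27`. By the chain rule `D' = 2X · f'(X² + 1)`. The second
factor is coprime to `D` because `f` is separable, which Euler's identity `3f - Yf' = 81` shows; the
first is coprime to `D` because `D` takes the value `f(1) = 31` at the critical point `0` of
`X² + 1`.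
-/

section Separable

variable {R : Type*} [CommRing R]

theorem isCoprime_X_right_iff {p : R[X]} : IsCoprime p X ↔ IsUnit (p.coeff 0) := by
  rw [← isUnit_C, ← isCoprime_zero_right]
  constructor
  · intro h
    simpa [coeff_zero_eq_eval_zero] using h.map (C.comp (evalRingHom 0))
  · intro h
    have hX : IsCoprime (C (p.coeff 0)) X := h.of_isCoprime_of_dvd_right (dvd_zero X)
    rw [← divX_mul_X_add p]
    exact hX.mul_add_right_left _

theorem separable_comp {f q : R[X]} (hf : f.Separable)
    (hq : IsCoprime (f.comp q) (derivative q)) : (f.comp q).Separable := by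
  rw [separable_def, derivative_comp]
  exact hq.mul_right (IsCoprime.map hf (compRingHom q))

theorem separable_comp_X_sq_add_C {f : R[X]} {c : R} (h2 : IsUnit (2 : R)) (hf : f.Separable)
    (hc : IsUnit (f.eval c)) : (f.comp (X ^ 2 + C c)).Separable := by
  refine separable_comp hf ?_
  have hderiv : derivative (X ^ 2 + C c) = C 2 * X := by
    rw [derivative_add, derivative_X_sq, derivative_C, add_zero]
  have hcoeff : (f.comp (X ^ 2 + C c)).coeff 0 = f.eval c := by
    simp [coeff_zero_eq_eval_zero, eval_comp]
  rw [hderiv, isCoprime_mul_unit_left_right (isUnit_C.2 h2), isCoprime_X_right_iff, hcoeff]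
  exact hc

theorem separable_C_mul_X_pow_add_C {n : ℕ} (a : R) {b : R} (hn : IsUnit (n : R))
    (hb : IsUnit b) : (C a * X ^ n + C b).Separable := by
  have euler : C (n : R) * (C a * X ^ n + C b) - X * derivative (C a * X ^ n + C b) =
      C (n * b) := by
    cases n with
    | zero => simp
    | succ n =>
      simp only [derivative_add, derivative_C_mul_X_pow, derivative_C, Nat.add_sub_cancel, C_mul]
      ring
  obtain ⟨u, hu⟩ := (hn.mul hb).exists_left_inv
  refine ⟨C u * C (n : R), -(C u * X), ?_⟩
  calc C u * C (n : R) * (C a * X ^ n + C b) + -(C u * X) * derivative (C a * X ^ n + C b)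
      = C u * C (n * b) := by rw [← euler]; ring
    _ = 1 := by rw [← C_mul, hu, C_1]

theorem separable_C_mul_X_sq_add_C_pow_add_C {n : ℕ} {a b c : R} (h2 : IsUnit (2 : R))
    (hn : IsUnit (n : R)) (hb : IsUnit b) (hc : IsUnit (a * c ^ n + b)) :
    (C a * (X ^ 2 + C c) ^ n + C b).Separable := by
  have heval : (C a * X ^ n + C b).eval c = a * c ^ n + b := by simp
  have hcomp : (C a * X ^ n + C b).comp (X ^ 2 + C c) = C a * (X ^ 2 + C c) ^ n + C b := by simp
  rw [← hcomp]
  exact separable_comp_X_sq_add_C h2 (separable_C_mul_X_pow_add_C a hn hb) (heval ▸ hc)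

end Separable

theorem natDegree_C_mul_X_sq_add_C_pow_add_C {R : Type*} [Semiring R] [NoZeroDivisors R]
    (n : ℕ) {a : R} (ha : a ≠ 0) (b c : R) :
    (C a * (X ^ 2 + C c) ^ n + C b).natDegree = n * 2 := by
  have : Nontrivial R := nontrivial_of_ne a 0 ha
  rw [natDegree_add_C, natDegree_C_mul ha, natDegree_pow, natDegree_X_pow_add_C]

theorem card_toFinset_roots_eq_natDegree {K : Type*} [Field K] [IsSepClosed K] [DecidableEq K]
    {p : K[X]} (hp : p.Separable) : p.roots.toFinset.card = p.natDegree := by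
  rw [Multiset.toFinset_card_of_nodup (nodup_roots hp),
    (IsSepClosed.splits_of_separable p hp).natDegree_eq_card_roots]

theorem stmt_1_general {K : Type*} [Field K] [IsSepClosed K] [DecidableEq K]
    (h2 : (2 : K) ≠ 0) (h3 : (3 : K) ≠ 0) (h31 : (31 : K) ≠ 0) :
    ((4 : K[X]) * (X ^ 2 + 1) ^ 3 + 27).roots.Nodup ∧
      ((4 : K[X]) * (X ^ 2 + 1) ^ 3 + 27).roots.toFinset.card = 6 := by
  have hD : (4 : K[X]) * (X ^ 2 + 1) ^ 3 + 27 = C 4 * (X ^ 2 + C 1) ^ 3 + C 27 := by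
    simp only [C_ofNat, C_1]
  have h4 : (4 : K) ≠ 0 := by
    rw [show (4 : K) = 2 ^ 2 by norm_num]
    exact pow_ne_zero 2 h2
  have h27 : (27 : K) ≠ 0 := by
    rw [show (27 : K) = 3 ^ 3 by norm_num]
    exact pow_ne_zero 3 h3
  have hcrit : (4 * 1 ^ 3 + 27 : K) ≠ 0 := by
    rwa [show (4 * 1 ^ 3 + 27 : K) = 31 by norm_num]
  have hsep : (C (4 : K) * (X ^ 2 + C 1) ^ 3 + C 27).Separable :=
    separable_C_mul_X_sq_add_C_pow_add_C h2.isUnit (by exact_mod_cast h3.isUnit) h27.isUnit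
      hcrit.isUnit
  rw [hD, card_toFinset_roots_eq_natDegree hsep, natDegree_C_mul_X_sq_add_C_pow_add_C 3 h4]
  exact ⟨nodup_roots hsep, rfl⟩

/-- The polynomial `D(X) = 4(X²+1)³ + 27` in `ℂ[X]` has exactly six roots in `ℂ`, each of
multiplicity one: the multiset of roots has no repeated element and its underlying set has
cardinality 6. -/
theorem stmt_1 :
    ((4 : ℂ[X]) * (X ^ 2 + 1) ^ 3 + 27).roots.Nodup ∧
      ((4 : ℂ[X]) * (X ^ 2 + 1) ^ 3 + 27).roots.toFinset.card = 6 :=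
  stmt_1_general two_ne_zero three_ne_zero (by norm_num)
end

section
/- The group of rational points E₀(ℚ) of the elliptic curve E₀ over ℚ given by y² = x³ + x + 1 is an infinite group. -/
/-- The Weierstrass curve `E₀ : y² = x³ + x + 1` over `ℚ`. -/
def E₀ : WeierstrassCurve ℚ := ⟨0, 0, 0, 1, 1⟩

/-! On a Weierstrass curve with `v`-integral coefficients, the duplication formula reads
`x(2P) = (x⁴ - ⋯) / (4x³ + ⋯)`. If `v(4x) > 1`, the leading terms of the numerator and the
denominator dominate, so `v(x(2P)) = v(x) / v(4)`. When moreover `v(2) < 1`, the valuation of the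
`x`-coordinate grows strictly under repeated doubling, hence `P` has infinite order. This applies to
`P = 4 • (0, 1)` on `E₀`, with `v` the 2-adic valuation. -/

open Polynomial WeierstrassCurve
open WeierstrassCurve.Affine hiding baseChange

section Doubling

variable {K : Type*} [Field K] {W : WeierstrassCurve K} {x y : K}

lemma eval_Ψ₂Sq_eq_sub_negY_sq (h : W.toAffine.Equation x y) :
    W.Ψ₂Sq.eval x = (y - W.toAffine.negY x y) ^ 2 := by
  rw [equation_iff] at h
  simp only [Ψ₂Sq, b₂, b₄, b₆, negY, eval_add, eval_mul, eval_C, eval_pow, eval_X]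
  linear_combination -4 * h

lemma addX_slope_self_mul_eval_Ψ₂Sq [DecidableEq K] (h : W.toAffine.Equation x y)
    (hy : y ≠ W.toAffine.negY x y) :
    W.toAffine.addX x x (W.toAffine.slope x x y y) * W.Ψ₂Sq.eval x = (W.Φ 2).eval x := by
  have hy₀ : y - W.toAffine.negY x y ≠ 0 := sub_ne_zero.mpr hy
  have hslope : W.toAffine.slope x x y y * (y - W.toAffine.negY x y) =
      3 * x ^ 2 + 2 * W.a₂ * x + W.a₄ - W.a₁ * y := by
    rw [slope_of_Y_ne rfl hy, div_mul_cancel₀ _ hy₀]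
  rw [eval_Ψ₂Sq_eq_sub_negY_sq h, Φ_two]
  rw [equation_iff] at h
  generalize W.toAffine.slope x x y y = m at hslope
  simp only [addX, negY, b₄, b₆, b₈, eval_sub, eval_mul, eval_C, eval_pow, eval_X] at hslope ⊢
  linear_combination (m * (y - (-y - W.a₁ * x - W.a₃)) +
    (3 * x ^ 2 + 2 * W.a₂ * x + W.a₄ - W.a₁ * y) +
    W.a₁ * (y - (-y - W.a₁ * x - W.a₃))) * hslope - (W.a₁ ^ 2 + 4 * W.a₂ + 8 * x) * h

end Doubling

section Valuation

variable {K Γ₀ : Type*} [Field K] [LinearOrderedCommGroupWithZero Γ₀] (v : Valuation K Γ₀)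

lemma valuation_eval_eq_of_one_lt {p : K[X]} (hp : ∀ i, v (p.coeff i) ≤ 1) {x : K}
    (hx : 1 < v p.leadingCoeff * v x) :
    v (p.eval x) = v p.leadingCoeff * v x ^ p.natDegree := by
  have hvx : 1 < v x := hx.trans_le (mul_le_of_le_one_left' (hp _))
  have dominant (i) (hi : i ∈ Finset.range (p.natDegree + 1) \ {p.natDegree}) :
      v (p.coeff i * x ^ i) < v (p.coeff p.natDegree * x ^ p.natDegree) := by
    have hlt : i < p.natDegree := by
      simp only [Finset.mem_sdiff, Finset.mem_range, Finset.mem_singleton] at hi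
      lia
    calc
      v (p.coeff i * x ^ i) ≤ v x ^ i := by
        rw [map_mul, map_pow]
        exact mul_le_of_le_one_left' (hp i)
      _ < v p.leadingCoeff * v x * v x ^ i :=
        lt_mul_of_one_lt_left (pow_pos (zero_lt_one.trans hvx) i) hx
      _ = v p.leadingCoeff * v x ^ (i + 1) := by rw [pow_succ', mul_assoc]
      _ ≤ v p.leadingCoeff * v x ^ p.natDegree := by gcongr; exacts [hvx.le, hlt]
      _ = v (p.coeff p.natDegree * x ^ p.natDegree) := by
        rw [map_mul, map_pow, coeff_natDegree]
  rw [eval_eq_sum_range, v.map_sum_eq_of_lt (Finset.self_mem_range_succ _) dominant, map_mul,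
    map_pow, coeff_natDegree]

section IntegralCurve

variable (W : WeierstrassCurve K) [W.IsIntegral v.integer]

lemma valuation_coeff_Ψ₂Sq_le_one (i : ℕ) : v (W.Ψ₂Sq.coeff i) ≤ 1 := by
  rw [← baseChange_integralModel_eq v.integer W, baseChange, map_Ψ₂Sq, coeff_map]
  exact (v.mem_integer_iff _).mp (SetLike.coe_mem _)

lemma valuation_coeff_Φ_le_one (n : ℤ) (i : ℕ) : v ((W.Φ n).coeff i) ≤ 1 := by
  rw [← baseChange_integralModel_eq v.integer W, baseChange, map_Φ, coeff_map]
  exact (v.mem_integer_iff _).mp (SetLike.coe_mem _)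

variable {x : K}

lemma valuation_eval_Φ (n : ℤ) (hx : 1 < v x) : v ((W.Φ n).eval x) = v x ^ n.natAbs ^ 2 := by
  have lead : v (W.Φ n).leadingCoeff = 1 := by rw [leadingCoeff_Φ, map_one]
  rw [valuation_eval_eq_of_one_lt v (valuation_coeff_Φ_le_one v W n) (by rwa [lead, one_mul]),
    lead, one_mul, natDegree_Φ]

lemma valuation_eval_Ψ₂Sq (hx : 1 < v 4 * v x) : v (W.Ψ₂Sq.eval x) = v 4 * v x ^ 3 := by
  have four_ne_zero : (4 : K) ≠ 0 := by
    intro h4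
    simp [h4] at hx
  have lead : W.Ψ₂Sq.leadingCoeff = 4 := leadingCoeff_Ψ₂Sq W four_ne_zero
  rw [valuation_eval_eq_of_one_lt v (valuation_coeff_Ψ₂Sq_le_one v W) (by rwa [lead]), lead,
    natDegree_Ψ₂Sq W four_ne_zero]

end IntegralCurve

/-- The valuation of the `x`-coordinate of a point, which measures how close the point is to
infinity and grows under doubling when it is large. The point at infinity is sent to `0`
rather than `∞`. -/
def xValuation {W : WeierstrassCurve K} : W.toAffine.Point → Γ₀
  | .zero => 0
  | .some x _ _ => v x

variable [DecidableEq K] {W : WeierstrassCurve K} [W.IsIntegral v.integer] {P : W.toAffine.Point}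

lemma valuation_four_mul_xValuation_two_nsmul (hP : 1 < v 4 * xValuation v P) :
    v 4 * xValuation v (2 • P) = xValuation v P := by
  rcases P with _ | ⟨x, y, h⟩
  · simp [xValuation] at hP
  change 1 < v 4 * v x at hP
  have v_four_le : v 4 ≤ 1 := W.coeff_Ψ₂Sq ▸ valuation_coeff_Ψ₂Sq_le_one v W 3
  have one_lt_v_x : 1 < v x := hP.trans_le (mul_le_of_le_one_left' v_four_le)
  have v_x_ne_zero : v x ≠ 0 := (zero_lt_one.trans one_lt_v_x).ne'
  have v_Φ : v ((W.Φ 2).eval x) = v x ^ 4 := valuation_eval_Φ v W 2 one_lt_v_x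
  have v_Ψ₂Sq : v (W.Ψ₂Sq.eval x) = v 4 * v x ^ 3 := valuation_eval_Ψ₂Sq v W hP
  have hy : y ≠ W.toAffine.negY x y := by
    have v_Ψ₂Sq_ne_zero : v (W.Ψ₂Sq.eval x) ≠ 0 := v_Ψ₂Sq ▸
      mul_ne_zero (left_ne_zero_of_mul (zero_lt_one.trans hP).ne') (pow_ne_zero 3 v_x_ne_zero)
    rw [v.ne_zero_iff, eval_Ψ₂Sq_eq_sub_negY_sq h.1] at v_Ψ₂Sq_ne_zero
    exact sub_ne_zero.mp ((pow_ne_zero_iff two_ne_zero).mp v_Ψ₂Sq_ne_zero)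
  rw [two_nsmul, Point.add_self_of_Y_ne hy]
  change v 4 * v (W.toAffine.addX x x (W.toAffine.slope x x y y)) = v x
  apply mul_right_cancel₀ (pow_ne_zero 3 v_x_ne_zero)
  rw [← pow_succ', ← v_Φ, ← addX_slope_self_mul_eval_Ψ₂Sq h.1 hy, map_mul, v_Ψ₂Sq,
    mul_assoc, mul_left_comm]

lemma xValuation_lt_xValuation_two_nsmul (hv : v 2 < 1) (hP : 1 < v 4 * xValuation v P) :
    xValuation v P < xValuation v (2 • P) := by
  have v_four_lt : v 4 < 1 := by
    rw [show (4 : K) = 2 ^ 2 by norm_num, map_pow]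
    exact pow_lt_one₀ zero_le hv two_ne_zero
  have h := valuation_four_mul_xValuation_two_nsmul v hP
  have pos : 0 < xValuation v (2 • P) := by
    rw [zero_lt_iff]
    intro h0
    simp [← h, h0] at hP
  exact h ▸ mul_lt_of_lt_one_left pos v_four_lt

lemma strictMono_xValuation_two_pow_nsmul (hv : v 2 < 1) (hP : 1 < v 4 * xValuation v P) :
    StrictMono fun n : ℕ ↦ xValuation v (2 ^ n • P) := by
  have threshold (n : ℕ) : 1 < v 4 * xValuation v (2 ^ n • P) := by
    induction n with
    | zero => simpa using hP
    | succ n ih =>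
      rw [pow_succ', mul_nsmul']
      exact ih.trans_le (mul_le_mul_right (xValuation_lt_xValuation_two_nsmul v hv ih).le _)
  refine strictMono_nat_of_lt_succ fun n ↦ ?_
  rw [pow_succ', mul_nsmul']
  exact xValuation_lt_xValuation_two_nsmul v hv (threshold n)

theorem not_isOfFinAddOrder_of_one_lt_xValuation (hv : v 2 < 1) (hP : 1 < v 4 * xValuation v P) :
    ¬ IsOfFinAddOrder P := by
  rw [← infinite_multiples]
  have injective : Function.Injective fun n : ℕ ↦ 2 ^ n • P :=
    .of_comp (f := xValuation v) (strictMono_xValuation_two_pow_nsmul v hv hP).injective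
  refine (Set.infinite_range_of_injective injective).mono ?_
  rintro _ ⟨n, rfl⟩
  exact ⟨2 ^ n, rfl⟩

end Valuation

instance E₀.isIntegral_padicValuation_integer (p : ℕ) [Fact p.Prime] :
    E₀.IsIntegral (Rat.padicValuation p).integer :=
  ⟨⟨0, 0, 0, 1, 1⟩, by ext <;> simp [E₀, baseChange]⟩

/-- The group of rational points `E₀(ℚ)` of the elliptic curve `E₀ : y² = x³ + x + 1` over `ℚ`
is an infinite group. -/
theorem stmt_5 : Infinite E₀.toAffine.Point := by
  -- This point is `4 • (0, 1)`; for `2 • (0, 1) = (1 / 4, -9 / 8)` one only has `v (4x) = 1`.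
  have on_curve : E₀.toAffine.Nonsingular (-287 / 1296) (40879 / 46656) := by
    rw [nonsingular_iff, equation_iff]
    norm_num [E₀]
  have one_lt : 1 < Rat.padicValuation 2 (4 * (-287 / 1296)) := by
    rw [← not_le, Rat.padicValuation_le_one_iff, not_not]
    norm_num
  have two_lt : Rat.padicValuation 2 2 < 1 := by
    exact_mod_cast (Rat.padicValuation_self 2).trans_lt (by decide)
  have infinite_order := not_isOfFinAddOrder_of_one_lt_xValuation (P := .some _ _ on_curve) _ two_lt
    (by rwa [map_mul] at one_lt)
  exact not_finite_iff_infinite.mp fun _ ↦ infinite_order (isOfFinAddOrder_of_finite _)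
end
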